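/- For every R > 0 there is a constant C(R), depending only on R, such that for every probability density G on ℝ³ × ℝ³ with finite Fisher information I(G) := ∫_{ℝ⁶} |∇G|²/G < ∞, one has ∫_{B_R × B_R} G(v,w)/|v−w| dv dw ≤ C(R)·(1 + I(G)), where B_R ⊂ ℝ³ is the closed ball of radius R centered at the origin. -/

import Mathlib

open MeasureTheory Real

noncomputable section

abbrev V3 := Fin 3 → ℝ

/-- Squared Euclidean norm on ℝ³. -/
def sq3 (z : V3) : ℝ := ∑ α, (z α) ^ 2
/-- Euclidean norm on ℝ³. -/
def nrm3 (z : V3) : ℝ := Real.sqrt (sq3 z)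

/-- Partial derivative in the `α`-th coordinate of the first variable `v`. -/
def pdv (G : V3 × V3 → ℝ) (z : V3 × V3) (α : Fin 3) : ℝ :=
  fderiv ℝ G z (Pi.single α 1, 0)

/-- Partial derivative in the `α`-th coordinate of the second variable `w`. -/
def pdw (G : V3 × V3 → ℝ) (z : V3 × V3) (α : Fin 3) : ℝ :=
  fderiv ℝ G z (0, Pi.single α 1)

/-- Fisher information of a density on ℝ³ × ℝ³. -/
def fisher2 (G : V3 × V3 → ℝ) : ℝ :=
  ∫ z : V3 × V3, (∑ α, ((pdv G z α) ^ 2 + (pdw G z α) ^ 2)) / G z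

open Filter Topology

lemma sq3_nonneg (z : V3) : 0 ≤ sq3 z := Finset.sum_nonneg fun _ _ => sq_nonneg _

lemma sq_apply_le_sq3 (z : V3) (α : Fin 3) : z α ^ 2 ≤ sq3 z :=
  Finset.single_le_sum (f := fun β => z β ^ 2) (fun _ _ => sq_nonneg _) (Finset.mem_univ α)

lemma continuous_sq3 : Continuous sq3 := by
  unfold sq3
  fun_prop

lemma sq3_add_smul_single (x : V3) (α : Fin 3) (t : ℝ) :
    sq3 (x + t • Pi.single α 1) = sq3 x + 2 * x α * t + t ^ 2 := by
  fin_cases α <;> simp [sq3, Fin.sum_univ_three] <;> ring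

/-- Regularized distance `√(|v - w|² + e)`. -/
def regDist (e : ℝ) (z : V3 × V3) : ℝ := √(sq3 (z.1 - z.2) + e)

lemma continuous_regDist (e : ℝ) : Continuous (regDist e) :=
  ((continuous_sq3.comp (continuous_fst.sub continuous_snd)).add continuous_const).sqrt

lemma sq_regDist {e : ℝ} (he : 0 < e) (z : V3 × V3) :
    regDist e z ^ 2 = sq3 (z.1 - z.2) + e :=
  Real.sq_sqrt (add_nonneg (sq3_nonneg _) he.le)

lemma regDist_pos {e : ℝ} (he : 0 < e) (z : V3 × V3) : 0 < regDist e z :=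
  Real.sqrt_pos.2 (add_pos_of_nonneg_of_pos (sq3_nonneg _) he)

lemma sqrt_le_regDist (e : ℝ) (z : V3 × V3) : √e ≤ regDist e z :=
  Real.sqrt_le_sqrt (le_add_of_nonneg_left (sq3_nonneg _))

/-- The `α`-th component of the regularized unit vector field `(v - w) / √(|v - w|² + e)`. -/
def regDir (e : ℝ) (α : Fin 3) (z : V3 × V3) : ℝ := (z.1 α - z.2 α) / regDist e z

/-- The derivative of `regDir e α` in the `α`-th coordinate of `v`. -/
def regDirDeriv (e : ℝ) (α : Fin 3) (z : V3 × V3) : ℝ :=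
  1 / regDist e z - (z.1 α - z.2 α) ^ 2 / regDist e z ^ 3

lemma hasLineDerivAt_regDir {e : ℝ} (he : 0 < e) (α : Fin 3) (z : V3 × V3) :
    HasLineDerivAt ℝ (regDir e α) (regDirDeriv e α z) z (Pi.single α 1, 0) := by
  have hs := regDist_pos he z
  have h0 := sq_regDist he z
  set a := z.1 α - z.2 α with ha
  have hnum : HasDerivAt (fun t : ℝ => a + t) 1 0 := (hasDerivAt_id 0).const_add a
  have hin : HasDerivAt (fun t : ℝ => sq3 (z.1 - z.2) + 2 * a * t + t ^ 2 + e) (2 * a) 0 := by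
    have h := ((((hasDerivAt_id (0 : ℝ)).const_mul (2 * a)).const_add
      (sq3 (z.1 - z.2))).add ((hasDerivAt_id (0 : ℝ)).pow 2)).add_const e
    convert! h using 1
    simp
  have hden := hin.sqrt (by simpa using (add_pos_of_nonneg_of_pos (sq3_nonneg (z.1 - z.2)) he).ne')
  have hbase : √(sq3 (z.1 - z.2) + 2 * a * 0 + 0 ^ 2 + e) = regDist e z := by simp [regDist]
  have hquot := hnum.div hden (by rw [hbase]; exact hs.ne')
  rw [hbase] at hquot
  have hval : (1 * regDist e z - (a + 0) * (2 * a / (2 * regDist e z))) / regDist e z ^ 2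
      = regDirDeriv e α z := by
    rw [regDirDeriv, ← ha]
    field_simp
    ring
  rw [hval] at hquot
  refine HasDerivAt.congr_of_eventuallyEq hquot (Eventually.of_forall fun t => ?_)
  have hsub : (z + t • ((Pi.single α 1, 0) : V3 × V3)).1
      - (z + t • ((Pi.single α 1, 0) : V3 × V3)).2
      = (z.1 - z.2) + t • (Pi.single α 1 : V3) := by
    simp only [Prod.fst_add, Prod.snd_add, Prod.smul_fst, Prod.smul_snd, smul_zero, add_zero]
    abel
  have hcoord := congrFun hsub α
  simp only [Pi.sub_apply, Pi.add_apply, Pi.smul_apply, Pi.single_eq_same, smul_eq_mul,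
    mul_one] at hcoord
  simp only [regDir, regDist, hsub, sq3_add_smul_single, Pi.div_apply, Pi.sub_apply, ← ha]
  rw [hcoord]

lemma sq_coord_le_sq_regDist {e : ℝ} (he : 0 < e) (α : Fin 3) (z : V3 × V3) :
    (z.1 α - z.2 α) ^ 2 ≤ regDist e z ^ 2 := by
  rw [sq_regDist he]
  exact (sq_apply_le_sq3 (z.1 - z.2) α).trans (le_add_of_nonneg_right he.le)

lemma abs_regDir_le_one {e : ℝ} (he : 0 < e) (α : Fin 3) (z : V3 × V3) :
    |regDir e α z| ≤ 1 := by
  have hs := regDist_pos he z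
  rw [regDir, abs_div, abs_of_pos hs, div_le_one hs]
  exact abs_le_of_sq_le_sq (sq_coord_le_sq_regDist he α z) hs.le

lemma abs_regDirDeriv_le {e : ℝ} (he : 0 < e) (α : Fin 3) (z : V3 × V3) :
    |regDirDeriv e α z| ≤ 1 / √e := by
  have hs := regDist_pos he z
  have hle : (z.1 α - z.2 α) ^ 2 / regDist e z ^ 3 ≤ 1 / regDist e z := by
    rw [div_le_div_iff₀ (by positivity) hs]
    nlinarith [sq_coord_le_sq_regDist he α z]
  have hnn : 0 ≤ (z.1 α - z.2 α) ^ 2 / regDist e z ^ 3 := by positivity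
  rw [regDirDeriv, abs_of_nonneg (by linarith)]
  have := one_div_le_one_div_of_le (Real.sqrt_pos.2 he) (sqrt_le_regDist e z)
  linarith

lemma two_div_regDist_le_sum {e : ℝ} (he : 0 < e) (z : V3 × V3) :
    2 / regDist e z ≤ ∑ α, regDirDeriv e α z := by
  have hs := regDist_pos he z
  have hsum : ∑ α, regDirDeriv e α z
      = 3 / regDist e z - sq3 (z.1 - z.2) / regDist e z ^ 3 := by
    simp only [regDirDeriv, sq3, Fin.sum_univ_three, Pi.sub_apply]
    ring
  have hle : sq3 (z.1 - z.2) / regDist e z ^ 3 ≤ 1 / regDist e z := by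
    rw [div_le_div_iff₀ (by positivity) hs]
    nlinarith [sq_regDist he z]
  rw [hsum]
  have : 3 / regDist e z = 2 / regDist e z + 1 / regDist e z := by ring
  linarith

lemma continuous_regDir {e : ℝ} (he : 0 < e) (α : Fin 3) : Continuous (regDir e α) := by
  have := continuous_regDist e
  exact Continuous.div (by fun_prop) this fun z => (regDist_pos he z).ne'

lemma continuous_regDirDeriv {e : ℝ} (he : 0 < e) (α : Fin 3) :
    Continuous (regDirDeriv e α) := by
  have := continuous_regDist e
  refine (continuous_const.div this fun z => (regDist_pos he z).ne').sub ?_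
  exact Continuous.div (by fun_prop) (by fun_prop) fun z => (pow_pos (regDist_pos he z) 3).ne'

lemma fderiv_eq_zero_of_nonneg_of_eq_zero {E : Type*} [NormedAddCommGroup E] [NormedSpace ℝ E]
    {G : E → ℝ} (h0 : ∀ z, 0 ≤ G z) {z : E} (hz : G z = 0) : fderiv ℝ G z = 0 :=
  IsLocalMin.fderiv_eq_zero (Eventually.of_forall fun y => hz ▸ h0 y)

/-- Pointwise bound of the gradient in `v` by the Fisher information density and the density. -/
lemma sum_abs_pdv_le {G : V3 × V3 → ℝ} (h0 : ∀ z, 0 ≤ G z) (z : V3 × V3) :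
    ∑ α, |pdv G z α| ≤
      ((∑ α, ((pdv G z α) ^ 2 + (pdw G z α) ^ 2)) / G z + 3 * G z) / 2 := by
  rcases (h0 z).eq_or_lt' with hz | hz
  · simp [pdv, pdw, fderiv_eq_zero_of_nonneg_of_eq_zero h0 hz, hz]
  · have hα : ∀ α, |pdv G z α| ≤ (((pdv G z α) ^ 2 + (pdw G z α) ^ 2) / G z + G z) / 2 := by
      intro α
      rw [le_div_iff₀ two_pos, div_add' _ _ _ hz.ne', le_div_iff₀ hz]
      nlinarith [sq_nonneg (|pdv G z α| - G z), sq_abs (pdv G z α), sq_nonneg (pdw G z α)]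
    refine (Finset.sum_le_sum fun α _ => hα α).trans_eq ?_
    simp only [Fin.sum_univ_three]
    ring

/-- The Coulomb energy with the regularized distance is controlled by the Fisher information. -/
lemma integral_div_regDist_le {G : V3 × V3 → ℝ} (h0 : ∀ z, 0 ≤ G z) (hGi : Integrable G)
    (hG1 : ∫ z, G z = 1) (hd : Differentiable ℝ G)
    (hI : Integrable (fun z : V3 × V3 => (∑ α, ((pdv G z α) ^ 2 + (pdw G z α) ^ 2)) / G z))
    {e : ℝ} (he : 0 < e) :
    Integrable (fun z => G z / regDist e z) ∧
      ∫ z, G z / regDist e z ≤ (3 + fisher2 G) / 4 := by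
  have hbound : Integrable (fun z =>
      ((∑ α, ((pdv G z α) ^ 2 + (pdw G z α) ^ 2)) / G z + 3 * G z) / 2) :=
    (hI.add (hGi.const_mul 3)).div_const 2
  have hpdv : ∀ α, Integrable (fun z => pdv G z α) := fun α =>
    hbound.mono' (measurable_fderiv_apply_const ℝ G _).aestronglyMeasurable
      (ae_of_all _ fun z => (Finset.single_le_sum (f := fun β => |pdv G z β|)
        (fun _ _ => abs_nonneg _) (Finset.mem_univ α)).trans (sum_abs_pdv_le h0 z))
  have hGF : ∀ α, Integrable (fun z => G z * regDir e α z) := fun α =>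
    hGi.mul_bdd (c := 1) (continuous_regDir he α).aestronglyMeasurable
      (ae_of_all _ fun z => abs_regDir_le_one he α z)
  have hGF' : ∀ α, Integrable (fun z => G z * regDirDeriv e α z) := fun α =>
    hGi.mul_bdd (c := 1 / √e) (continuous_regDirDeriv he α).aestronglyMeasurable
      (ae_of_all _ fun z => abs_regDirDeriv_le he α z)
  have hG'F : ∀ α, Integrable (fun z => pdv G z α * regDir e α z) := fun α =>
    (hpdv α).mul_bdd (c := 1) (continuous_regDir he α).aestronglyMeasurable
      (ae_of_all _ fun z => abs_regDir_le_one he α z)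
  have : (volume : Measure (V3 × V3)).IsAddHaarMeasure :=
    Measure.prod.instIsAddHaarMeasure volume volume
  have hparts : ∀ α, ∫ z, G z * regDirDeriv e α z = -∫ z, pdv G z α * regDir e α z := fun α =>
    integral_bilinear_hasLineDerivAt_right_eq_neg_left_of_integrable
      (B := ContinuousLinearMap.mul ℝ ℝ) (hG'F α) (hGF' α) (hGF α)
      (fun z _ => (hd z).hasFDerivAt.hasLineDerivAt _)
      (fun z _ => hasLineDerivAt_regDir he α z)
  have hint : Integrable (fun z => G z / regDist e z) := by
    simp only [div_eq_mul_inv]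
    refine hGi.mul_bdd (c := 1 / √e) ((continuous_regDist e).inv₀
      fun z => (regDist_pos he z).ne').aestronglyMeasurable (ae_of_all _ fun z => ?_)
    rw [Real.norm_eq_abs, abs_of_pos (inv_pos.2 (regDist_pos he z)), ← one_div]
    exact one_div_le_one_div_of_le (Real.sqrt_pos.2 he) (sqrt_le_regDist e z)
  refine ⟨hint, ?_⟩
  have hlow : 2 * ∫ z, G z / regDist e z ≤ ∑ α, ∫ z, G z * regDirDeriv e α z := by
    rw [← integral_const_mul, ← integral_finsetSum _ fun α _ => hGF' α]
    refine integral_mono (hint.const_mul 2) (integrable_finsetSum _ fun α _ => hGF' α) fun z => ?_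
    calc 2 * (G z / regDist e z) = G z * (2 / regDist e z) := by ring
      _ ≤ G z * ∑ α, regDirDeriv e α z :=
        mul_le_mul_of_nonneg_left (two_div_regDist_le_sum he z) (h0 z)
      _ = ∑ α, G z * regDirDeriv e α z := Finset.mul_sum _ _ _
  have hup : ∑ α, ∫ z, G z * regDirDeriv e α z ≤ (fisher2 G + 3) / 2 := by
    have hval : ∫ z, ((∑ α, ((pdv G z α) ^ 2 + (pdw G z α) ^ 2)) / G z + 3 * G z) / 2
        = (fisher2 G + 3) / 2 := by
      rw [integral_div, integral_add hI (hGi.const_mul 3), integral_const_mul, hG1, fisher2,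
        mul_one]
    have hneg : ∀ α, Integrable (fun z => -(pdv G z α * regDir e α z)) := fun α => (hG'F α).neg
    simp only [hparts, ← integral_neg]
    rw [← integral_finsetSum _ fun α _ => hneg α, ← hval]
    refine integral_mono (integrable_finsetSum _ fun α _ => hneg α) hbound fun z => ?_
    refine (Finset.sum_le_sum fun α _ => ?_).trans (sum_abs_pdv_le h0 z)
    calc -(pdv G z α * regDir e α z) ≤ |pdv G z α| * |regDir e α z| := by
          rw [← abs_mul]; exact neg_le_abs _
      _ ≤ |pdv G z α| := mul_le_of_le_one_right (abs_nonneg _) (abs_regDir_le_one he α z)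
  linarith

lemma ofReal_div_nrm3_le_liminf {G : V3 × V3 → ℝ} (z : V3 × V3) :
    ENNReal.ofReal (G z / nrm3 (z.1 - z.2)) ≤
      liminf (fun n : ℕ => ENNReal.ofReal (G z / regDist (1 / ((n : ℝ) + 1)) z)) atTop := by
  by_cases hz : nrm3 (z.1 - z.2) = 0
  · simp [hz]
  · have hlim : Tendsto (fun n : ℕ => regDist (1 / ((n : ℝ) + 1)) z) atTop
        (𝓝 (nrm3 (z.1 - z.2))) := by
      have h := ((tendsto_one_div_add_atTop_nhds_zero_nat (𝕜 := ℝ)).const_add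
        (sq3 (z.1 - z.2))).sqrt
      simpa only [add_zero, regDist, nrm3] using h
    exact (ENNReal.tendsto_ofReal (tendsto_const_nhds.div hlim hz)).liminf_eq.ge

/-- For every `R > 0` there is `C(R)` such that for every probability density `G`
on ℝ³ × ℝ³ with finite Fisher information,
`∫_{B_R × B_R} G(v,w)/|v−w| ≤ C(R)(1 + I(G))`. -/
theorem coulomb_singularity_fisher_bound :
    ∀ R : ℝ, 0 < R → ∃ C : ℝ, 0 < C ∧
      ∀ G : V3 × V3 → ℝ, Measurable G → (∀ z, 0 ≤ G z) →
        (∫ z : V3 × V3, G z) = 1 → Differentiable ℝ G →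
        Integrable (fun z : V3 × V3 => (∑ α, ((pdv G z α) ^ 2 + (pdw G z α) ^ 2)) / G z) →
        (∫ z in {p : V3 × V3 | nrm3 p.1 ≤ R ∧ nrm3 p.2 ≤ R}, G z / nrm3 (z.1 - z.2))
          ≤ C * (1 + fisher2 G) := by
  intro R _
  refine ⟨1, one_pos, fun G hGm h0 hG1 hd hI => ?_⟩
  have hGi : Integrable G := by
    by_contra h
    simp [integral_undef h] at hG1
  have hfisher : 0 ≤ fisher2 G := integral_nonneg fun z =>
    div_nonneg (Finset.sum_nonneg fun α _ => add_nonneg (sq_nonneg _) (sq_nonneg _)) (h0 z)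
  have hmeas : Measurable (fun z : V3 × V3 => G z / nrm3 (z.1 - z.2)) :=
    hGm.div (continuous_sq3.sqrt.measurable.comp (measurable_fst.sub measurable_snd))
  have hnn : ∀ z : V3 × V3, 0 ≤ G z / nrm3 (z.1 - z.2) := fun z =>
    div_nonneg (h0 z) (Real.sqrt_nonneg _)
  have hglobal : ∫⁻ z : V3 × V3, ENNReal.ofReal (G z / nrm3 (z.1 - z.2))
      ≤ ENNReal.ofReal ((3 + fisher2 G) / 4) := by
    refine (lintegral_mono ofReal_div_nrm3_le_liminf).trans
      ((lintegral_liminf_le fun n =>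
        (hGm.div (continuous_regDist _).measurable).ennreal_ofReal).trans ?_)
    refine liminf_le_of_le (by isBoundedDefault) fun b hb => ?_
    obtain ⟨n, hn⟩ := hb.exists
    have he : (0 : ℝ) < 1 / ((n : ℝ) + 1) := by positivity
    obtain ⟨hint, hle⟩ := integral_div_regDist_le h0 hGi hG1 hd hI he
    refine hn.trans ?_
    simp only [Pi.div_apply]
    rw [← ofReal_integral_eq_lintegral_ofReal hint
      (ae_of_all _ fun z => div_nonneg (h0 z) (regDist_pos he z).le)]
    exact ENNReal.ofReal_le_ofReal hle
  rw [integral_eq_lintegral_of_nonneg_ae (ae_of_all _ hnn) hmeas.aestronglyMeasurable]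
  refine (ENNReal.toReal_le_of_le_ofReal (by linarith)
    ((setLIntegral_le_lintegral _ _).trans hglobal)).trans ?_
  linarith
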